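/- arXiv:2208.09265 — 6 statements merged into one kernel-verified Lean document; each statement's English description precedes it below -/
import Mathlib

section
/- For every positive integer b and every positive integer m, the sum over j from 1 to m of F(b,j) is at most 2.8; that is, \(\sum_{j=1}^{m} b^2 \binom{(j+2)b-2}{b-1} (1/2)^{(j+2)b-1} \le 2.8\). -/
/-- `F b j = b² · C((j+2)b − 2, b − 1) · (1/2)^((j+2)b − 1)`, the bound on the
expected number of holes in region `j` for local-buffer size `b`. -/
noncomputable def F (b j : ℕ) : ℝ :=
  (b : ℝ) ^ 2 * (Nat.choose ((j + 2) * b - 2) (b - 1) : ℝ) * (1 / 2) ^ ((j + 2) * b - 1)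

/-!
For fixed `b`, passing from `j` to `j + 1` multiplies the binomial coefficient by a product of
`b - 1` factors, each at most `2`, and the power of `1/2` by `2⁻ᵇ`. Hence `F b (j + 1) ≤ F b j / 2`,
and the sum is at most `2 * F b 1` by comparison with a geometric series.

The ratio `F (b + 1) 1 / F b 1` is a rational function of `b` with limit `27/32`; it is at most `1`
from `b = 9` on. So `F b 1` is largest for some `b ≤ 9`, and these values are below `1.4`.
-/

theorem sum_range_le_div_one_sub_of_succ_le_mul {K : Type*} [Field K] [LinearOrder K]
    [IsStrictOrderedRing K] {u : ℕ → K} {r : K} (hr : r < 1) (hu : ∀ i, 0 ≤ u i)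
    (hstep : ∀ i, u (i + 1) ≤ r * u i) (n : ℕ) :
    ∑ i ∈ Finset.range n, u i ≤ u 0 / (1 - r) := by
  rw [le_div_iff₀ (sub_pos.2 hr), Finset.sum_mul]
  calc ∑ i ∈ Finset.range n, u i * (1 - r)
      ≤ ∑ i ∈ Finset.range n, (u i - u (i + 1)) :=
        Finset.sum_le_sum fun i _ => by linarith [hstep i]
    _ = u 0 - u n := Finset.sum_range_sub' u n
    _ ≤ u 0 := sub_le_self _ (hu n)

theorem descFactorial_le_pow_mul_descFactorial {m n r k : ℕ}
    (h : ∀ i < k, m - i ≤ r * (n - i)) :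
    m.descFactorial k ≤ r ^ k * n.descFactorial k := by
  simp only [Nat.descFactorial_eq_prod_range]
  calc ∏ i ∈ Finset.range k, (m - i)
      ≤ ∏ i ∈ Finset.range k, r * (n - i) :=
        Finset.prod_le_prod' fun i hi => h i (Finset.mem_range.1 hi)
    _ = r ^ k * ∏ i ∈ Finset.range k, (n - i) := by
        rw [Finset.prod_mul_distrib, Finset.prod_const, Finset.card_range]

theorem choose_le_pow_mul_choose {m n r k : ℕ} (h : ∀ i < k, m - i ≤ r * (n - i)) :
    m.choose k ≤ r ^ k * n.choose k := by
  have hdesc := descFactorial_le_pow_mul_descFactorial h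
  rw [Nat.descFactorial_eq_factorial_mul_choose, Nat.descFactorial_eq_factorial_mul_choose,
    mul_left_comm] at hdesc
  exact Nat.le_of_mul_le_mul_left hdesc k.factorial_pos

theorem add_three_choose_succ_mul (k l : ℕ) :
    (k + l + 3).choose (k + 1) * ((k + 1) * (l + 2) * (l + 1)) =
      (k + l).choose k * ((k + l + 3) * (k + l + 2) * (k + l + 1)) := by
  have both : (k + l + 3).choose (k + 1) * (k + 1) = (k + l + 3) * (k + l + 2).choose k :=
    (Nat.add_one_mul_choose_eq (k + l + 2) k).symm
  have upper (i : ℕ) : (k + i + 1).choose k * (i + 1) = (k + i).choose k * (k + i + 1) := by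
    rw [Nat.choose_mul_succ_eq, add_assoc k i, Nat.add_sub_cancel_left]
  calc (k + l + 3).choose (k + 1) * ((k + 1) * (l + 2) * (l + 1))
      = (k + l + 3) * ((k + l + 2).choose k * (l + 2)) * (l + 1) := by
        linear_combination ((l + 2) * (l + 1)) * both
    _ = (k + l + 3) * (k + l + 2) * ((k + l + 1).choose k * (l + 1)) := by
        linear_combination ((k + l + 3) * (l + 1)) * upper (l + 1)
    _ = (k + l).choose k * ((k + l + 3) * (k + l + 2) * (k + l + 1)) := by
        linear_combination ((k + l + 3) * (k + l + 2)) * upper l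

theorem F_nonneg (b j : ℕ) : 0 ≤ F b j := by
  unfold F
  positivity

theorem F_succ_left (c j : ℕ) :
    F (c + 1) j =
      ((c : ℝ) + 1) ^ 2 * ((j + 2) * c + j).choose c * (1 / 2) ^ ((j + 2) * c + j + 1) := by
  have hmul : (j + 2) * (c + 1) = (j + 2) * c + j + 2 := by ring
  simp only [F, hmul, Nat.add_sub_cancel, Nat.add_succ_sub_one, Nat.cast_add, Nat.cast_one]

theorem F_succ_right_le (b j : ℕ) : F b (j + 1) ≤ 1 / 2 * F b j := by
  rcases b with _ | c
  · simp [F]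
  set n := (j + 2) * c + j with hn
  have hshift : (j + 1 + 2) * c + (j + 1) = n + (c + 1) := by rw [hn]; ring
  have hchoose : ((n + (c + 1)).choose c : ℝ) ≤ 2 ^ c * n.choose c := by
    have hlarge : 2 * c ≤ n := by rw [hn]; nlinarith
    exact_mod_cast choose_le_pow_mul_choose fun i hi => by omega
  have hpow : (2 : ℝ) ^ c * (1 / 2) ^ c = 1 := by simp
  rw [F_succ_left, F_succ_left, hshift, ← hn]
  calc ((c : ℝ) + 1) ^ 2 * ((n + (c + 1)).choose c : ℝ) * (1 / 2) ^ (n + (c + 1) + 1)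
      ≤ ((c : ℝ) + 1) ^ 2 * (2 ^ c * (n.choose c : ℝ)) * (1 / 2) ^ (n + (c + 1) + 1) := by gcongr
    _ = 1 / 2 * (((c : ℝ) + 1) ^ 2 * (n.choose c : ℝ) * (1 / 2) ^ (n + 1)) *
        (2 ^ c * (1 / 2) ^ c) := by ring
    _ = 1 / 2 * (((c : ℝ) + 1) ^ 2 * (n.choose c : ℝ) * (1 / 2) ^ (n + 1)) := by rw [hpow, mul_one]

theorem sum_Icc_F_le_two_mul (b m : ℕ) : ∑ j ∈ Finset.Icc 1 m, F b j ≤ 2 * F b 1 := by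
  calc ∑ j ∈ Finset.Icc 1 m, F b j
      = ∑ i ∈ Finset.range m, F b (1 + i) := by
        rw [← Finset.Ico_add_one_right_eq_Icc, Finset.sum_Ico_eq_sum_range, Nat.add_sub_cancel]
    _ ≤ F b 1 / (1 - 1 / 2) :=
        sum_range_le_div_one_sub_of_succ_le_mul (by norm_num) (fun i => F_nonneg b (1 + i))
          (fun i => F_succ_right_le b (1 + i)) m
    _ = 2 * F b 1 := by ring

theorem F_add_two_one_mul (c : ℕ) :
    F (c + 2) 1 * (8 * (c + 1) ^ 2 * ((c + 1) * (2 * c + 3) * (2 * c + 2))) =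
      F (c + 1) 1 * ((c + 2) ^ 2 * ((3 * c + 4) * (3 * c + 3) * (3 * c + 2))) := by
  have hchoose : ((3 * c + 4).choose (c + 1) : ℝ) * ((c + 1) * (2 * c + 3) * (2 * c + 2)) =
      (3 * c + 1).choose c * ((3 * c + 4) * (3 * c + 3) * (3 * c + 2)) := by
    have h := add_three_choose_succ_mul c (2 * c + 1)
    rw [show c + (2 * c + 1) = 3 * c + 1 by ring] at h
    exact_mod_cast h
  rw [F_succ_left (c + 1), F_succ_left c, show (1 + 2) * (c + 1) + 1 = 3 * c + 4 by ring,
    show (1 + 2) * c + 1 = 3 * c + 1 by ring]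
  push_cast
  linear_combination (c + 1 : ℝ) ^ 2 * (c + 2) ^ 2 * (1 / 2) ^ (3 * c + 2) * hchoose

theorem F_one_ratio_numerator_le_denominator {x : ℝ} (hx : 8 ≤ x) :
    (x + 2) ^ 2 * ((3 * x + 4) * (3 * x + 3) * (3 * x + 2)) ≤
      8 * (x + 1) ^ 2 * ((x + 1) * (2 * x + 3) * (2 * x + 2)) := by
  obtain ⟨d, hd, rfl⟩ : ∃ d : ℝ, 0 ≤ d ∧ x = d + 8 := ⟨x - 8, by linarith, by ring⟩
  -- As a polynomial in `d`, the difference of the two sides has positive coefficients.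
  rw [← sub_nonneg]
  ring_nf
  positivity

theorem antitoneOn_F_one : AntitoneOn (F · 1) (Set.Ici 9) := by
  refine antitoneOn_nat_Ici_of_succ_le fun b hb => ?_
  obtain ⟨c, rfl⟩ : ∃ c, b = c + 1 := ⟨b - 1, by omega⟩
  have hc : (8 : ℝ) ≤ c := by exact_mod_cast Nat.le_of_succ_le_succ hb
  refine le_of_mul_le_mul_right ?_
    (show (0 : ℝ) < 8 * (c + 1) ^ 2 * ((c + 1) * (2 * c + 3) * (2 * c + 2)) by positivity)
  rw [F_add_two_one_mul]
  exact mul_le_mul_of_nonneg_left (F_one_ratio_numerator_le_denominator hc) (F_nonneg _ _)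

theorem F_one_le (b : ℕ) : F b 1 ≤ 1.4 := by
  have small {b : ℕ} (hb : b ≤ 9) : F b 1 ≤ 1.4 := by
    interval_cases b <;> norm_num [F, Nat.choose]
  rcases le_total b 9 with hb | hb
  · exact small hb
  · exact (antitoneOn_F_one Set.self_mem_Ici hb hb).trans (small le_rfl)

theorem sum_F_le :
    ∀ b m : ℕ, 0 < b → 0 < m → ∑ j ∈ Finset.Icc 1 m, F b j ≤ 2.8 := by
  intro b m _ _
  calc ∑ j ∈ Finset.Icc 1 m, F b j
      ≤ 2 * F b 1 := sum_Icc_F_le_two_mul b m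
    _ ≤ 2 * 1.4 := by gcongr; exact F_one_le b
    _ = 2.8 := by norm_num
end

section
/- For every positive integer b and every positive integer j, \((1/2)^{b-1} \binom{(j+3)b-2}{b-1} \le \binom{(j+2)b-2}{b-1}\). -/
/-!
Cancelling `k!` turns the comparison of `C(m, k)` and `C(n, k)` into a factor-by-factor comparison
of `m (m - 1) ⋯ (m - k + 1)` and `n (n - 1) ⋯ (n - k + 1)`. The inequality `m - i ≤ 2 (n - i)` is
tightest at `i = k - 1`, where it reads `m + k ≤ 2 n + 1`.
-/

section OrderedSemiring

variable {R : Type*} [CommSemiring R] {r : R} {m n k : ℕ}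

theorem pow_mul_descFactorial_le_descFactorial [PartialOrder R] [IsOrderedRing R] (hr : 0 ≤ r)
    (h : ∀ i < k, r * ((m - i : ℕ) : R) ≤ ((n - i : ℕ) : R)) :
    r ^ k * (m.descFactorial k : R) ≤ (n.descFactorial k : R) := by
  calc r ^ k * (m.descFactorial k : R)
      = ∏ i ∈ Finset.range k, r * ((m - i : ℕ) : R) := by
        rw [Nat.descFactorial_eq_prod_range, Nat.cast_prod, Finset.prod_mul_distrib,
          Finset.prod_const, Finset.card_range]
    _ ≤ ∏ i ∈ Finset.range k, ((n - i : ℕ) : R) :=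
        Finset.prod_le_prod (fun i _ => mul_nonneg hr (Nat.cast_nonneg _))
          fun i hi => h i (Finset.mem_range.mp hi)
    _ = (n.descFactorial k : R) := by
        rw [Nat.descFactorial_eq_prod_range, Nat.cast_prod]

theorem pow_mul_choose_le_choose [LinearOrder R] [IsStrictOrderedRing R] (hr : 0 ≤ r)
    (h : ∀ i < k, r * ((m - i : ℕ) : R) ≤ ((n - i : ℕ) : R)) :
    r ^ k * (m.choose k : R) ≤ (n.choose k : R) := by
  have factorial_pos : (0 : R) < (k.factorial : R) := Nat.cast_pos.mpr k.factorial_pos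
  refine le_of_mul_le_mul_left ?_ factorial_pos
  calc (k.factorial : R) * (r ^ k * (m.choose k : R))
      = r ^ k * (m.descFactorial k : R) := by
        rw [Nat.descFactorial_eq_factorial_mul_choose, Nat.cast_mul, mul_left_comm]
    _ ≤ (n.descFactorial k : R) := pow_mul_descFactorial_le_descFactorial hr h
    _ = (k.factorial : R) * (n.choose k : R) := by
        rw [Nat.descFactorial_eq_factorial_mul_choose, Nat.cast_mul]

end OrderedSemiring

theorem half_pow_mul_choose_le_general {K : Type*} [Field K] [LinearOrder K]
    [IsStrictOrderedRing K] {m n k : ℕ} (h : m + k ≤ 2 * n + 1) :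
    (1 / 2 : K) ^ k * (m.choose k : K) ≤ (n.choose k : K) := by
  refine pow_mul_choose_le_choose (by positivity) fun i hi => ?_
  have factor_le : m - i ≤ 2 * (n - i) := by omega
  have cast_factor_le : ((m - i : ℕ) : K) ≤ 2 * ((n - i : ℕ) : K) := mod_cast factor_le
  linarith

theorem half_pow_mul_choose_le :
    ∀ b j : ℕ, 0 < b → 0 < j →
      (1 / 2 : ℝ) ^ (b - 1) * (Nat.choose ((j + 3) * b - 2) (b - 1) : ℝ) ≤
        (Nat.choose ((j + 2) * b - 2) (b - 1) : ℝ) := by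
  intro b j _ _
  exact half_pow_mul_choose_le_general (by rw [add_mul, add_mul]; omega)
end

section
/- For every positive integer b, every positive integer j, and every natural number i with 0 ≤ i ≤ b − 2, \((1/2)^{jb+2i+1} \binom{jb+2i}{i} \le (1/2)^{jb+2(i+1)+1} \binom{jb+2(i+1)}{i+1}\); that is, the function f_{b,j}(i) is monotonically increasing for i in {0, 1, …, b−1}. -/
/-! The ratio of the two binomial coefficients is `(m + 2i + 1)(m + 2i + 2) / ((i + 1)(m + i + 1))`
with `m = jb`, and the powers of `1 / 2` contribute a factor `1 / 4`. Since
`(m + 2i + 1)(m + 2i + 2) - 4(i + 1)(m + i + 1) = m(m - 1) - 2(i + 1)`,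
the value does not decrease from `i` to `i + 1` exactly when `i + 1 ≤ m.choose 2`, which holds as
soon as `i + 2 ≤ m`. -/

theorem choose_add_two_succ_mul_eq (n k : ℕ) :
    (n + 2).choose (k + 1) * ((k + 1) * (n + 1 - k)) = n.choose k * ((n + 1) * (n + 2)) :=
  calc (n + 2).choose (k + 1) * ((k + 1) * (n + 1 - k))
      = (n + 2).choose (k + 1) * (k + 1) * (n + 1 - k) := by rw [mul_assoc]
    _ = (n + 2) * (n + 1).choose k * (n + 1 - k) := by rw [← Nat.add_one_mul_choose_eq (n + 1) k]
    _ = (n + 2) * (n.choose k * (n + 1)) := by rw [mul_assoc, ← Nat.choose_mul_succ_eq]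
    _ = n.choose k * ((n + 1) * (n + 2)) := by ring

theorem le_succ_choose_two (n : ℕ) : n ≤ (n + 1).choose 2 := by
  rw [Nat.choose_succ_succ' n 1, Nat.choose_one_right]
  exact Nat.le_add_right _ _

theorem two_mul_choose_two_add_self (m : ℕ) : 2 * m.choose 2 + m = m ^ 2 := by
  induction m with
  | zero => rfl
  | succ m ih =>
    rw [Nat.choose_succ_succ' m 1, Nat.choose_one_right]
    linarith

theorem four_mul_succ_mul_le_iff (m i : ℕ) :
    4 * ((i + 1) * (m + i + 1)) ≤ (m + 2 * i + 1) * (m + 2 * i + 2) ↔ i + 1 ≤ m.choose 2 := by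
  have difference : (m + 2 * i + 1) * (m + 2 * i + 2) + 2 * (i + 1) =
      4 * ((i + 1) * (m + i + 1)) + 2 * m.choose 2 := by
    linarith [two_mul_choose_two_add_self m]
  omega

theorem four_mul_choose_le_choose_iff (m i : ℕ) :
    4 * (m + 2 * i).choose i ≤ (m + 2 * (i + 1)).choose (i + 1) ↔ i + 1 ≤ m.choose 2 := by
  have ratio : (m + 2 * (i + 1)).choose (i + 1) * ((i + 1) * (m + i + 1)) =
      (m + 2 * i).choose i * ((m + 2 * i + 1) * (m + 2 * i + 2)) := by
    rw [← choose_add_two_succ_mul_eq, show m + 2 * i + 1 - i = m + i + 1 by omega,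
      show m + 2 * (i + 1) = m + 2 * i + 2 by ring]
  have coeff_pos : 0 < (m + 2 * i).choose i := Nat.choose_pos (by omega)
  have denominator_pos : 0 < (i + 1) * (m + i + 1) := by positivity
  rw [← four_mul_succ_mul_le_iff, ← mul_le_mul_iff_left₀ denominator_pos, ratio,
    mul_comm 4, mul_assoc, mul_le_mul_iff_right₀ coeff_pos]

theorem f_monotone_general {K : Type*} [Field K] [LinearOrder K] [IsStrictOrderedRing K]
    (m i : ℕ) :
    (1 / 2 : K) ^ (m + 2 * i + 1) * ((m + 2 * i).choose i : K) ≤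
        (1 / 2 : K) ^ (m + 2 * (i + 1) + 1) * ((m + 2 * (i + 1)).choose (i + 1) : K) ↔
      i + 1 ≤ m.choose 2 := by
  have pow_step : (1 / 2 : K) ^ (m + 2 * (i + 1) + 1) = (1 / 2) ^ (m + 2 * i + 1) * (1 / 4) := by
    ring
  have weight_pos : 0 < (1 / 2 : K) ^ (m + 2 * i + 1) := by positivity
  rw [pow_step, mul_assoc, mul_le_mul_iff_right₀ weight_pos, one_div_mul_eq_div,
    le_div_iff₀' four_pos, ← four_mul_choose_le_choose_iff]
  norm_cast

theorem f_monotone :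
    ∀ b j : ℕ, 0 < b → 0 < j → ∀ i : ℕ, (i : ℤ) ≤ (b : ℤ) - 2 →
      (1 / 2 : ℝ) ^ (j * b + 2 * i + 1) * (Nat.choose (j * b + 2 * i) i : ℝ) ≤
        (1 / 2 : ℝ) ^ (j * b + 2 * (i + 1) + 1) *
          (Nat.choose (j * b + 2 * (i + 1)) (i + 1) : ℝ) := by
  intro b j _ hj i hi
  have hm : i + 2 ≤ j * b := le_trans (by omega) (Nat.le_mul_of_pos_left b hj)
  exact (f_monotone_general (j * b) i).2
    ((le_succ_choose_two (i + 1)).trans (Nat.choose_le_choose 2 hm))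
end

section
/- Fix integers j ≥ 1 and b ≥ 3. The real-valued function \(g(x) = \frac{1}{4} \cdot \frac{(jb+2x+2)(jb+2x+1)}{(jb+x+1)(x+1)}\) is monotonically decreasing on the interval 0 ≤ x ≤ b − 1; that is, for all real x, y with 0 ≤ x ≤ y ≤ b − 1, g(y) ≤ g(x). -/
/-!
In terms of `s = x + 1` and `a = j b` the function is `1 + (c - s) / (2 s (s + a))` with
`c = a (a - 1) / 2`. For `s ≤ t`, clearing denominators in the comparison of the values of
`(c - s) / (s (s + a))` at `s` and `t` leaves `(t - s) (c (s + t + a) - s t)`. This is nonnegative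
as long as `s` and `t` are at most `2 c = a (a - 1)`, a range that contains `b`.
-/

open Set

section OrderedRing

variable {R : Type*} [CommRing R] [LinearOrder R] [IsStrictOrderedRing R] {a c s t j b : R}

lemma mul_le_mul_add_add_of_le_two_mul (ha : 0 ≤ a) (hs₀ : 0 ≤ s) (hs : s ≤ 2 * c)
    (ht₀ : 0 ≤ t) (ht : t ≤ 2 * c) : s * t ≤ c * (s + t + a) := by
  have hst : s * t ≤ 2 * c * t := mul_le_mul_of_nonneg_right hs ht₀
  have hts : s * t ≤ s * (2 * c) := mul_le_mul_of_nonneg_left ht hs₀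
  have hca : 0 ≤ c * a := mul_nonneg (by linarith) ha
  linarith

lemma le_mul_mul_sub_one (hj : 1 ≤ j) (hb : 2 ≤ b) : b ≤ j * b * (j * b - 1) := by
  have hjb : b ≤ j * b := le_mul_of_one_le_left (by linarith) hj
  calc
    b ≤ j * b := hjb
    _ ≤ j * b * (j * b - 1) := le_mul_of_one_le_right (by linarith) (by linarith)

end OrderedRing

lemma quarter_mul_div_eq_one_add {K : Type*} [Field K] [CharZero K] {a x : K}
    (hx : x + 1 ≠ 0) (hax : a + x + 1 ≠ 0) :
    (1 / 4) * ((a + 2 * x + 2) * (a + 2 * x + 1)) / ((a + x + 1) * (x + 1)) =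
      1 + (1 / 2) * ((a * (a - 1) / 2 - (x + 1)) / ((x + 1) * (x + 1 + a))) := by
  have hcomm : a + x + 1 = x + 1 + a := by ring
  rw [hcomm] at hax ⊢
  field_simp
  ring

section OrderedField

variable {𝕜 : Type*} [Field 𝕜] [LinearOrder 𝕜] [IsStrictOrderedRing 𝕜] {a c : 𝕜}

lemma antitoneOn_sub_div_mul_add (ha : 0 ≤ a) :
    AntitoneOn (fun s : 𝕜 ↦ (c - s) / (s * (s + a))) (Ioc 0 (2 * c)) := by
  rintro s ⟨hs₀, hs⟩ t ⟨ht₀, ht⟩ hst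
  have hfactor : (c - s) * (t * (t + a)) - (c - t) * (s * (s + a)) =
      (t - s) * (c * (s + t + a) - s * t) := by ring
  have hfactor_nonneg : 0 ≤ (t - s) * (c * (s + t + a) - s * t) :=
    mul_nonneg (sub_nonneg.2 hst)
      (sub_nonneg.2 (mul_le_mul_add_add_of_le_two_mul ha hs₀.le hs ht₀.le ht))
  refine (div_le_div_iff₀ (by positivity) (by positivity)).2 ?_
  exact sub_nonneg.1 (hfactor ▸ hfactor_nonneg)

theorem g_antitone_general (ha : 0 ≤ a) :
    AntitoneOn
      (fun x : 𝕜 ↦ (1 / 4) * ((a + 2 * x + 2) * (a + 2 * x + 1)) / ((a + x + 1) * (x + 1)))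
      (Ioc (-1) (a * (a - 1) - 1)) := by
  have hshift {x : 𝕜} (hx : x ∈ Ioc (-1) (a * (a - 1) - 1)) :
      x + 1 ∈ Ioc 0 (2 * (a * (a - 1) / 2)) :=
    ⟨by linarith [hx.1], by linarith [hx.2]⟩
  have hrewrite {x : 𝕜} (hx : x ∈ Ioc (-1) (a * (a - 1) - 1)) :=
    quarter_mul_div_eq_one_add (a := a) (x := x) (by linarith [hx.1]) (by linarith [hx.1])
  intro x hx y hy hxy
  simp only [hrewrite hx, hrewrite hy]
  gcongr 1 + 1 / 2 * ?_
  exact antitoneOn_sub_div_mul_add ha (hshift hx) (hshift hy) (by gcongr)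

end OrderedField

theorem g_antitone :
    ∀ j b : ℕ, 1 ≤ j → 3 ≤ b → ∀ x y : ℝ, 0 ≤ x → x ≤ y → y ≤ (b : ℝ) - 1 →
      (1 / 4) * (((j : ℝ) * b + 2 * y + 2) * ((j : ℝ) * b + 2 * y + 1)) /
          (((j : ℝ) * b + y + 1) * (y + 1)) ≤
        (1 / 4) * (((j : ℝ) * b + 2 * x + 2) * ((j : ℝ) * b + 2 * x + 1)) /
          (((j : ℝ) * b + x + 1) * (x + 1)) := by
  intro j b hj hb x y hx hxy hy
  have hb_le : (b : ℝ) ≤ j * b * (j * b - 1) :=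
    le_mul_mul_sub_one (by exact_mod_cast hj) (by exact_mod_cast le_of_lt hb)
  exact g_antitone_general (by positivity) ⟨by linarith, by linarith⟩ ⟨by linarith, by linarith⟩ hxy
end

section
/- For every integer b ≥ 12, F(b+1,1) ≤ F(b,1); that is, \((b+1)^2 \binom{3b+1}{b} (1/2)^{3b+2} \le b^2 \binom{3b-2}{b-1} (1/2)^{3b-1}\). -/
/-!
Write `F(b, j)` for the bound on the expected number of holes. Consecutive binomial coefficients in
`b ↦ F(b, j)` differ by a quotient of rising factorials, so `F(b + 1, j) / F(b, j)` is an explicit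
rational function of `b`. For `j = 1` it equals `3 (b + 1)² (9 b² - 1) / (16 b³ (2 b + 1))`, whose
limit is `27 / 32 < 1`, and it is at most `1` exactly when `5 b⁴ - 38 b³ - 24 b² + 6 b + 3 ≥ 0`.
For positive integers this means `b ≥ 9`.
-/

theorem add_choose_mul_ascFactorial_mul_ascFactorial (m k r s : ℕ) :
    (m + r + (k + s)).choose (k + s) * ((k + 1).ascFactorial s * (m + 1).ascFactorial r) =
      (m + k).choose k * (m + k + 1).ascFactorial (r + s) := by
  have choose_large := Nat.add_choose_mul_factorial_mul_factorial (m + r) (k + s)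
  have choose_small := Nat.add_choose_mul_factorial_mul_factorial m k
  rw [show m + r + (k + s) = m + k + (r + s) by ring, ← Nat.factorial_mul_ascFactorial k s,
    ← Nat.factorial_mul_ascFactorial m r, ← Nat.factorial_mul_ascFactorial (m + k) (r + s),
    ← choose_small] at choose_large
  rw [show m + r + (k + s) = m + k + (r + s) by ring]
  refine Nat.eq_of_mul_eq_mul_right (Nat.mul_pos k.factorial_pos m.factorial_pos) ?_
  linarith

/-- The quantity `F(b, j)`, which for `j = 1` bounds the expected number of holes in the first
region of a Gather&Sort buffer with thread-local buffers of size `b`. The truncated subtractions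
agree with the integer ones when `b` is positive, and `holeBound 0 j = 0`. -/
noncomputable def holeBound (b j : ℕ) : ℝ :=
  (b : ℝ) ^ 2 * (((j + 2) * b - 2).choose (b - 1) : ℝ) * (1 / 2) ^ ((j + 2) * b - 1)

theorem holeBound_pos {b : ℕ} (hb : 0 < b) (j : ℕ) : 0 < holeBound b j := by
  have choose_pos : 0 < ((j + 2) * b - 2).choose (b - 1) := by
    refine Nat.choose_pos ?_
    have : 2 * b ≤ (j + 2) * b := Nat.mul_le_mul_right b (Nat.le_add_left 2 j)
    omega
  unfold holeBound
  positivity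

theorem holeBound_add_one (k j : ℕ) :
    holeBound (k + 1) j =
      ((k : ℝ) + 1) ^ 2 * (((j + 2) * k + j).choose k : ℝ) * (1 / 2) ^ ((j + 2) * k + j + 1) := by
  simp [holeBound, mul_add, ← add_assoc]

theorem holeBound_add_one_mul (b j : ℕ) :
    holeBound (b + 1) j * (2 ^ (j + 2) * (b : ℝ) ^ 3 * (((j + 1) * b).ascFactorial (j + 1) : ℝ)) =
      holeBound b j *
        (((b : ℝ) + 1) ^ 2 * (((j + 2) * b - 1).ascFactorial (j + 2) : ℝ)) := by
  rcases b with _ | k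
  · simp [holeBound]
  have choose_ratio := add_choose_mul_ascFactorial_mul_ascFactorial ((j + 1) * k + j) k (j + 1) 1
  rw [show (j + 1) * k + j + (j + 1) + (k + 1) = (j + 2) * (k + 1) + j by ring,
    show (j + 1) * k + j + 1 = (j + 1) * (k + 1) by ring,
    show (j + 1) * k + j + k = (j + 2) * k + j by ring,
    show (k + 1).ascFactorial 1 = k + 1 by simp [Nat.ascFactorial]] at choose_ratio
  have half_pow : (1 / 2 : ℝ) ^ ((j + 2) * (k + 1) + j + 1) * 2 ^ (j + 2) =
      (1 / 2) ^ ((j + 2) * k + j + 1) := by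
    rw [show (j + 2) * (k + 1) + j + 1 = (j + 2) * k + j + 1 + (j + 2) by ring, pow_add,
      mul_assoc, ← mul_pow]
    norm_num
  rw [holeBound_add_one, holeBound_add_one,
    show (j + 2) * (k + 1) - 1 = (j + 2) * k + j + 1 by rw [mul_add]; omega, ← half_pow]
  have choose_ratio_real := congrArg (Nat.cast : ℕ → ℝ) choose_ratio
  push_cast at choose_ratio_real ⊢
  linear_combination ((k : ℝ) + 1 + 1) ^ 2 * ((k : ℝ) + 1) ^ 2 *
    (1 / 2) ^ ((j + 2) * (k + 1) + j + 1) * 2 ^ (j + 2) * choose_ratio_real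

theorem holeBound_one_add_one_mul (b : ℕ) :
    holeBound (b + 1) 1 * (16 * (b : ℝ) ^ 3 * (2 * b + 1)) =
      holeBound b 1 * (3 * ((b : ℝ) + 1) ^ 2 * (9 * (b : ℝ) ^ 2 - 1)) := by
  rcases b with _ | k
  · simp [holeBound]
  have ratio := holeBound_add_one_mul (k + 1) 1
  rw [show (1 + 2) * (k + 1) - 1 = 3 * k + 2 by omega] at ratio
  simp only [Nat.ascFactorial] at ratio
  push_cast at ratio ⊢
  refine mul_right_cancel₀ (b := (k : ℝ) + 1) (by positivity) ?_
  linear_combination ratio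

theorem holeBound_one_add_one_le_iff {b : ℕ} (hb : 0 < b) :
    holeBound (b + 1) 1 ≤ holeBound b 1 ↔
      3 * ((b : ℝ) + 1) ^ 2 * (9 * (b : ℝ) ^ 2 - 1) ≤ 16 * (b : ℝ) ^ 3 * (2 * b + 1) := by
  have denominator_pos : 0 < 16 * (b : ℝ) ^ 3 * (2 * b + 1) := by positivity
  rw [← mul_le_mul_iff_left₀ denominator_pos, holeBound_one_add_one_mul,
    mul_le_mul_iff_right₀ (holeBound_pos hb 1)]

theorem ratio_numerator_le_denominator_iff {b : ℕ} (hb : 0 < b) :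
    3 * ((b : ℝ) + 1) ^ 2 * (9 * (b : ℝ) ^ 2 - 1) ≤ 16 * (b : ℝ) ^ 3 * (2 * b + 1) ↔ 9 ≤ b := by
  constructor
  · contrapose!
    intro hb_lt
    interval_cases b <;> norm_num
  · intro hb_ge
    obtain ⟨t, rfl⟩ := Nat.exists_eq_add_of_le hb_ge
    have shifted_quartic_nonneg :
        0 ≤ 5 * (t : ℝ) ^ 4 + 142 * t ^ 3 + 1380 * t ^ 2 + 4920 * t + 3216 := by positivity
    push_cast
    linear_combination shifted_quartic_nonneg

theorem F_one_decreasing_general {b : ℕ} (hb : 0 < b) :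
    holeBound (b + 1) 1 ≤ holeBound b 1 ↔ 9 ≤ b :=
  (holeBound_one_add_one_le_iff hb).trans (ratio_numerator_le_denominator_iff hb)

theorem F_one_decreasing :
    ∀ b : ℕ, 12 ≤ b →
      ((b : ℝ) + 1) ^ 2 * (Nat.choose (3 * b + 1) b : ℝ) * (1 / 2) ^ (3 * b + 2) ≤
        (b : ℝ) ^ 2 * (Nat.choose (3 * b - 2) (b - 1) : ℝ) * (1 / 2) ^ (3 * b - 1) := by
  intro b hb
  have h := (F_one_decreasing_general (by omega : 0 < b)).2 (by omega)
  rwa [holeBound_add_one, holeBound] at h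
end

section
/- Let φ, ε_r, ε' be real numbers with 0 ≤ φ ≤ 1, 0 ≤ ε_r ≤ φ, and ε' ≥ 0, and let n_old, n_new be real numbers with 0 ≤ n_old ≤ n_new ≤ (1+ε')·n_old. If a real number R satisfies (φ − ε_r)·n_old ≤ R ≤ (φ + ε_r)·n_old, then (φ − (ε_r + ε'))·n_new ≤ R ≤ (φ + (ε_r + ε'))·n_new. -/
/-!
As the stream grows, the lower end of the rank window rises by `(φ - εr) * (n_new - n_old)`. Its
slope `φ - εr` is at most `1`, so the rise is at most the number of new elements, which is at most
`ε' * n_old ≤ ε' * n_new`: lowering the slope by `ε'` compensates for it. The upper end only moves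
up, so there monotonicity suffices.
-/

section OrderedRing

variable {α : Type*} [Ring α] [PartialOrder α] [IsOrderedRing α]

theorem sub_mul_le_mul_of_le_one_add_mul {c ε m n : α} (hc : c ≤ 1) (hε : 0 ≤ ε)
    (hmn : m ≤ n) (hnm : n ≤ (1 + ε) * m) : (c - ε) * n ≤ c * m := by
  have growth_le : n - m ≤ ε * m := by
    rwa [sub_le_iff_le_add', ← one_add_mul]
  have rise_le : c * n - c * m ≤ ε * n :=
    calc c * n - c * m = c * (n - m) := (mul_sub c n m).symm
      _ ≤ n - m := mul_le_of_le_one_left (sub_nonneg.2 hmn) hc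
      _ ≤ ε * m := growth_le
      _ ≤ ε * n := mul_le_mul_of_nonneg_left hmn hε
  rw [sub_mul]
  exact sub_le_comm.1 rise_le

theorem staleness_error_general {φ εr ε' n_old n_new R : α}
    (hφ₀ : 0 ≤ φ) (hφ₁ : φ ≤ 1) (hεr : 0 ≤ εr) (hε' : 0 ≤ ε')
    (h_old : 0 ≤ n_old) (h_le : n_old ≤ n_new) (h_stale : n_new ≤ (1 + ε') * n_old)
    (hR_lower : (φ - εr) * n_old ≤ R) (hR_upper : R ≤ (φ + εr) * n_old) :
    (φ - (εr + ε')) * n_new ≤ R ∧ R ≤ (φ + (εr + ε')) * n_new := by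
  rw [← sub_sub, ← add_assoc]
  have slope_le_one : φ - εr ≤ 1 := (sub_le_self φ hεr).trans hφ₁
  constructor
  · exact (sub_mul_le_mul_of_le_one_add_mul slope_le_one hε' h_le h_stale).trans hR_lower
  · calc R ≤ (φ + εr) * n_old := hR_upper
      _ ≤ (φ + εr + ε') * n_new :=
        mul_le_mul (le_add_of_nonneg_right hε') h_le h_old (by positivity)

end OrderedRing

theorem staleness_error :
    ∀ φ εr ε' n_old n_new R : ℝ,
      0 ≤ φ → φ ≤ 1 → 0 ≤ εr → εr ≤ φ → 0 ≤ ε' →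
      0 ≤ n_old → n_old ≤ n_new → n_new ≤ (1 + ε') * n_old →
      (φ - εr) * n_old ≤ R → R ≤ (φ + εr) * n_old →
      (φ - (εr + ε')) * n_new ≤ R ∧ R ≤ (φ + (εr + ε')) * n_new := by
  intro φ εr ε' n_old n_new R hφ₀ hφ₁ hεr _ hε'
  exact staleness_error_general hφ₀ hφ₁ hεr hε'
end
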